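/- Let s₁, s₂ ≥ 0 with s₁ + s₂ > 2. There is a constant C depending only on s₁ and s₂ such that for every smooth compactly supported f : ℝ³ → ℂ, writing f̂(ξ,z) = ∫_{ℝ²} e^{−2πi y·ξ} f(y,z) dy for the partial Fourier transform in the horizontal variable, one has sup_{y ∈ ℝ², z ≤ 0} |f(y,z)|² ≤ C ( ∫_{ℝ²} ∫_{−∞}^{0} (1+|ξ|²)^{s₂} |∂_z f̂(ξ,z)|² dz dξ )^{1/2} · ( ∫_{ℝ²} ∫_{−∞}^{0} (1+|ξ|²)^{s₁} |f̂(ξ,z)|² dz dξ )^{1/2}. -/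

import Mathlib

open MeasureTheory

/-- Partial Fourier transform in the horizontal variable `y ∈ ℝ²`:
`f̂(ξ,z) = ∫_{ℝ²} e^{−2πi y·ξ} f(y,z) dy`. -/
noncomputable def partialFourier (f : ((Fin 2 → ℝ) × ℝ) → ℂ) (ξ : Fin 2 → ℝ) (z : ℝ) : ℂ :=
  ∫ y : Fin 2 → ℝ,
    Complex.exp (-((2 * Real.pi * ∑ i : Fin 2, y i * ξ i : ℝ) : ℂ) * Complex.I) * f (y, z)

namespace AS

abbrev E2 := Fin 2 → ℝ

def Good (f : (E2 × ℝ) → ℂ) : Prop := ContDiff ℝ (⊤ : ℕ∞) f ∧ HasCompactSupport f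

noncomputable def D (v : E2 × ℝ) (f : (E2 × ℝ) → ℂ) : (E2 × ℝ) → ℂ := fun x => fderiv ℝ f x v

noncomputable def W (ξ : E2) : ℝ := (1 : ℝ) + ∑ i : Fin 2, ξ i ^ 2

noncomputable def ker (ξ y : E2) : ℂ :=
  Complex.exp (-((2 * Real.pi * ∑ i : Fin 2, y i * ξ i : ℝ) : ℂ) * Complex.I)

lemma one_le_W (ξ : E2) : 1 ≤ W ξ := by
  unfold W; have : 0 ≤ ∑ i : Fin 2, ξ i ^ 2 := Finset.sum_nonneg (fun i _ => sq_nonneg _)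
  linarith

lemma W_pos (ξ : E2) : 0 < W ξ := lt_of_lt_of_le one_pos (one_le_W ξ)

lemma W_cont : Continuous W := by unfold W; fun_prop

lemma norm_ker (ξ y : E2) : ‖ker ξ y‖ = 1 := by
  unfold ker
  rw [← Complex.ofReal_neg, Complex.norm_exp_ofReal_mul_I]

lemma ker_cont : Continuous (fun p : E2 × E2 => ker p.1 p.2) := by
  unfold ker; fun_prop

lemma ker_cont' (ξ : E2) : Continuous (ker ξ) := by
  unfold ker; fun_prop

lemma Good.D {f : (E2 × ℝ) → ℂ} (hf : Good f) (v : E2 × ℝ) : Good (D v f) := by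
  refine ⟨?_, hf.2.fderiv_apply (𝕜 := ℝ) v⟩
  have := hf.1.fderiv_right (m := (⊤ : ℕ∞)) (by simp)
  exact this.clm_apply contDiff_const

lemma Good.cont {f : (E2 × ℝ) → ℂ} (hf : Good f) : Continuous f := hf.1.continuous

lemma Good.diff {f : (E2 × ℝ) → ℂ} (hf : Good f) : Differentiable ℝ f :=
  hf.1.differentiable (by simp)

lemma Good.bdd {f : (E2 × ℝ) → ℂ} (hf : Good f) : ∃ M, 0 ≤ M ∧ ∀ x, ‖f x‖ ≤ M := by
  obtain ⟨M, hM⟩ := hf.2.exists_bound_of_continuous hf.cont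
  exact ⟨M, (norm_nonneg _).trans (hM 0), hM⟩

lemma Good.supp {f : (E2 × ℝ) → ℂ} (hf : Good f) :
    ∃ R : ℝ, ∀ y z, (R < ‖y‖ ∨ R < |z|) → f (y, z) = 0 := by
  obtain ⟨R, hR⟩ := hf.2.isCompact.isBounded.subset_closedBall 0
  refine ⟨R, fun y z h => ?_⟩
  by_contra hne
  have : (y, z) ∈ tsupport f := subset_tsupport _ hne
  have := hR this
  simp [Prod.norm_def] at this
  rcases h with h | h <;> linarith [this.1, this.2]

lemma slice_supp {f : (E2 × ℝ) → ℂ} (hf : Good f) (z : ℝ) :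
    HasCompactSupport (fun y => f (y, z)) := by
  obtain ⟨R, hR⟩ := hf.supp
  refine HasCompactSupport.intro (isCompact_closedBall (0 : E2) R) (fun y hy => hR y z (Or.inl ?_))
  simpa using hy

lemma slice_cont {f : (E2 × ℝ) → ℂ} (hf : Good f) (z : ℝ) :
    Continuous (fun y => f (y, z)) := hf.cont.comp (by fun_prop)

lemma integrable_ker {f : (E2 × ℝ) → ℂ} (hf : Good f) (ξ : E2) (z : ℝ) :
    Integrable (fun y => ker ξ y * f (y, z)) :=
  Continuous.integrable_of_hasCompactSupport ((ker_cont' ξ).mul (slice_cont hf z))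
    ((slice_supp hf z).mul_left)

lemma PF_eq (f : (E2 × ℝ) → ℂ) (ξ : E2) (z : ℝ) :
    partialFourier f ξ z = ∫ y, ker ξ y * f (y, z) := rfl

lemma ker_fderiv (ξ y v : E2) :
    fderiv ℝ (ker ξ) y v = -((2 * Real.pi * ∑ i : Fin 2, v i * ξ i : ℝ) : ℂ) * Complex.I * ker ξ y := by
  have hd : DifferentiableAt ℝ (ker ξ) y := by unfold ker; fun_prop
  rw [← hd.lineDeriv_eq_fderiv]
  apply HasDerivAt.deriv
  unfold ker
  have h1 : HasDerivAt (fun t : ℝ => 2 * Real.pi * ∑ i : Fin 2, (y + t • v) i * ξ i)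
      (2 * Real.pi * ∑ i : Fin 2, v i * ξ i) 0 := by
    simp only [Fin.sum_univ_two, Pi.add_apply, Pi.smul_apply, smul_eq_mul]
    have : ∀ i, HasDerivAt (fun t : ℝ => (y i + t * v i) * ξ i) (v i * ξ i) 0 := by
      intro i
      simpa using (((hasDerivAt_id (0:ℝ)).mul_const (v i)).const_add (y i)).mul_const (ξ i)
    exact ((this 0).add (this 1)).const_mul _
  have h2 := ((h1.ofReal_comp.neg).mul_const Complex.I).cexp
  refine HasDerivAt.congr_deriv h2 ?_
  simp; ring

lemma PF_D {f : (E2 × ℝ) → ℂ} (hf : Good f) (v ξ : E2) (z : ℝ) :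
    partialFourier (D (v, 0) f) ξ z
      = ((2 * Real.pi * ∑ i : Fin 2, v i * ξ i : ℝ) : ℂ) * Complex.I * partialFourier f ξ z := by
  have hfd : ∀ y, fderiv ℝ (fun y => f (y, z)) y v = D (v, 0) f (y, z) := by
    intro y
    have h1 : HasFDerivAt (fun y : E2 => (y, z)) (ContinuousLinearMap.inl ℝ E2 ℝ) y := by
      exact hasFDerivAt_prodMk_left y z
    have := (hf.diff (y, z)).hasFDerivAt.comp y h1
    have h2 := this.fderiv
    change fderiv ℝ (f ∘ fun y => (y, z)) y v = _
    rw [h2]; simp [D]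
  have key := integral_mul_fderiv_eq_neg_fderiv_mul_of_integrable (μ := volume)
    (f := ker ξ) (g := fun y => f (y, z)) (v := v)
    (by simp_rw [ker_fderiv, mul_assoc]
        exact ((integrable_ker hf ξ z).const_mul _).const_mul _)
    (by simp_rw [hfd]; exact integrable_ker (hf.D _) ξ z)
    (integrable_ker hf ξ z)
    (fun x _ => by unfold ker; fun_prop)
    (fun x _ => (hf.diff (x, z)).comp x (by fun_prop))
  simp_rw [hfd, ker_fderiv, mul_assoc] at key
  rw [PF_eq, key, integral_const_mul, integral_const_mul, PF_eq]
  push_cast; ring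

noncomputable def T (f : (E2 × ℝ) → ℂ) : (E2 × ℝ) → ℂ := fun x =>
  f x - (((4 * Real.pi ^ 2)⁻¹ : ℝ) : ℂ) *
    (D (![1, 0], 0) (D (![1, 0], 0) f) x + D (![0, 1], 0) (D (![0, 1], 0) f) x)

lemma Good.T {f : (E2 × ℝ) → ℂ} (hf : Good f) : Good (T f) := by
  have h1 := (hf.D (![1, 0], 0)).D (![1, 0], 0)
  have h2 := (hf.D (![0, 1], 0)).D (![0, 1], 0)
  refine ⟨hf.1.sub (contDiff_const.mul (h1.1.add h2.1)), ?_⟩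
  have := (h1.2.add h2.2).mul_left (f := fun _ => (((4 * Real.pi ^ 2)⁻¹ : ℝ) : ℂ))
  exact hf.2.sub this

lemma PF_T {f : (E2 × ℝ) → ℂ} (hf : Good f) (ξ : E2) (z : ℝ) :
    partialFourier (T f) ξ z = (W ξ : ℂ) * partialFourier f ξ z := by
  have h1 := (hf.D (![1, 0], 0)).D (![1, 0], 0)
  have h2 := (hf.D (![0, 1], 0)).D (![0, 1], 0)
  have e1 := PF_D (hf.D (![1, 0], 0)) ![1, 0] ξ z
  have e2 := PF_D (hf.D (![0, 1], 0)) ![0, 1] ξ z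
  rw [PF_D hf] at e1 e2
  have : partialFourier (T f) ξ z = partialFourier f ξ z - (((4 * Real.pi ^ 2)⁻¹ : ℝ) : ℂ) *
      (partialFourier (D (![1, 0], 0) (D (![1, 0], 0) f)) ξ z
        + partialFourier (D (![0, 1], 0) (D (![0, 1], 0) f)) ξ z) := by
    simp only [PF_eq]
    have hadd : Integrable (fun y => ker ξ y * D (![1, 0], 0) (D (![1, 0], 0) f) (y, z) +
        ker ξ y * D (![0, 1], 0) (D (![0, 1], 0) f) (y, z)) :=
      (integrable_ker h1 ξ z).add (integrable_ker h2 ξ z)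
    rw [← integral_add (integrable_ker h1 ξ z) (integrable_ker h2 ξ z), ← integral_const_mul,
      ← integral_sub (integrable_ker hf ξ z)
        (hadd.const_mul _)]
    congr 1; ext y; simp only [T]; ring
  rw [this, e1, e2]
  have hpi : (Real.pi : ℂ) ≠ 0 := by exact_mod_cast Real.pi_ne_zero
  simp only [W, Fin.sum_univ_two]
  push_cast
  simp
  field_simp
  have hI : Complex.I ^ 2 = -1 := Complex.I_sq
  simp only [hI]
  ring

lemma decay (N : ℕ) : ∀ f : (E2 × ℝ) → ℂ, Good f →
    ∃ K : ℝ, 0 ≤ K ∧ ∀ ξ z, W ξ ^ N * ‖partialFourier f ξ z‖ ≤ K := by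
  induction N with
  | zero =>
    intro f hf
    obtain ⟨R, hR⟩ := hf.supp
    obtain ⟨M, hM0, hM⟩ := hf.bdd
    refine ⟨M * volume.real (Metric.closedBall (0 : E2) R), by positivity, fun ξ z => ?_⟩
    have : partialFourier f ξ z = ∫ y in Metric.closedBall (0 : E2) R, ker ξ y * f (y, z) := by
      rw [PF_eq, setIntegral_eq_integral_of_forall_compl_eq_zero]
      intro y hy
      rw [hR y z (Or.inl (by simpa using hy)), mul_zero]
    rw [pow_zero, one_mul, this]
    apply norm_setIntegral_le_of_norm_le_const measure_closedBall_lt_top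
    intro y _
    rw [norm_mul, norm_ker, one_mul]; exact hM _
  | succ N ih =>
    intro f hf
    obtain ⟨K, hK0, hK⟩ := ih (T f) hf.T
    refine ⟨K, hK0, fun ξ z => ?_⟩
    have := hK ξ z
    rw [PF_T hf, norm_mul, Complex.norm_real, Real.norm_of_nonneg (W_pos ξ).le] at this
    rw [pow_succ, mul_assoc]; exact this

lemma PF_cont {f : (E2 × ℝ) → ℂ} (hf : Good f) :
    Continuous (fun p : E2 × ℝ => partialFourier f p.1 p.2) := by
  obtain ⟨R, hR⟩ := hf.supp
  have : (fun p : E2 × ℝ => partialFourier f p.1 p.2) =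
      fun p => ∫ y in Metric.closedBall (0 : E2) R, ker p.1 y * f (y, p.2) := by
    ext p
    rw [PF_eq, setIntegral_eq_integral_of_forall_compl_eq_zero]
    intro y hy
    rw [hR y _ (Or.inl (by simpa using hy)), mul_zero]
  rw [this]
  refine continuous_parametric_integral_of_continuous
    (f := fun (p : E2 × ℝ) y => ker p.1 y * f (y, p.2)) ?_ (isCompact_closedBall _ _)
  have h1 : Continuous (fun q : (E2 × ℝ) × E2 => ker q.1.1 q.2) := by unfold ker; fun_prop
  have h2 : Continuous (fun q : (E2 × ℝ) × E2 => f (q.2, q.1.2)) := hf.cont.comp (by fun_prop)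
  exact h1.mul h2

lemma PF_supp {f : (E2 × ℝ) → ℂ} (hf : Good f) :
    ∃ R : ℝ, ∀ ξ z, R < |z| → partialFourier f ξ z = 0 := by
  obtain ⟨R, hR⟩ := hf.supp
  refine ⟨R, fun ξ z h => ?_⟩
  rw [PF_eq]
  simp [hR _ z (Or.inr h)]

lemma PF_deriv {f : (E2 × ℝ) → ℂ} (hf : Good f) (ξ : E2) (z : ℝ) :
    HasDerivAt (partialFourier f ξ) (partialFourier (D (0, 1) f) ξ z) z := by
  obtain ⟨R, hR⟩ := (hf.D (0, 1)).supp
  obtain ⟨M, hM0, hM⟩ := (hf.D (0, 1)).bdd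
  refine (hasDerivAt_integral_of_dominated_loc_of_deriv_le (μ := volume)
    (F := fun z y => ker ξ y * f (y, z)) (F' := fun z y => ker ξ y * D (0, 1) f (y, z))
    (bound := (Metric.closedBall (0 : E2) R).indicator (fun _ => M)) (s := Set.univ)
    Filter.univ_mem ?_ (integrable_ker hf ξ z) (integrable_ker (hf.D _) ξ z).1 ?_ ?_ ?_).2
  · exact Filter.Eventually.of_forall fun z => (integrable_ker hf ξ z).1
  · refine Filter.Eventually.of_forall fun y z _ => ?_
    rw [norm_mul, norm_ker, one_mul]
    by_cases h : y ∈ Metric.closedBall (0 : E2) R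
    · simpa [h] using hM _
    · rw [hR y z (Or.inl (by simpa using h))]
      simp [h]
  · exact (integrable_indicator_iff Metric.isClosed_closedBall.measurableSet).2
      (integrableOn_const measure_closedBall_lt_top.ne)
  · refine Filter.Eventually.of_forall fun y z _ => ?_
    refine HasDerivAt.const_mul _ ?_
    have h1 : HasDerivAt (fun z : ℝ => (y, z)) ((0 : E2), (1 : ℝ)) z :=
      (hasDerivAt_const z y).prodMk (hasDerivAt_id z)
    exact (hf.diff (y, z)).hasFDerivAt.comp_hasDerivAt z h1

lemma W_int {s : ℝ} (hs : 1 < s) : Integrable (fun ξ : E2 => W ξ ^ (-s)) := by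
  have h := integrable_rpow_neg_one_add_norm_sq (E := E2) (μ := volume) (r := 2 * s)
    (by simp; linarith)
  refine h.mono' (W_cont.rpow_const fun x => Or.inl (W_pos x).ne').aestronglyMeasurable
    (Filter.Eventually.of_forall fun ξ => ?_)
  rw [Real.norm_of_nonneg (Real.rpow_nonneg (W_pos ξ).le _), show -(2 * s) / 2 = -s by ring]
  refine Real.rpow_le_rpow_of_nonpos (by positivity) ?_ (by linarith)
  unfold W
  have : ‖ξ‖ ^ 2 ≤ ∑ i : Fin 2, ξ i ^ 2 := by
    have h0 : 0 ≤ ∑ i : Fin 2, ξ i ^ 2 := Finset.sum_nonneg (fun i _ => sq_nonneg _)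
    rw [← Real.sq_sqrt h0]
    refine pow_le_pow_left₀ (norm_nonneg _) ?_ 2
    refine (pi_norm_le_iff_of_nonneg (Real.sqrt_nonneg _)).2 fun i => ?_
    rw [Real.norm_eq_abs]
    apply Real.abs_le_sqrt
    exact Finset.single_le_sum (f := fun i => ξ i ^ 2) (fun i _ => sq_nonneg _) (Finset.mem_univ i)
  linarith

lemma CS {α : Type*} [MeasurableSpace α] {μ : Measure α} {f g : α → ℝ}
    (hf0 : ∀ x, 0 ≤ f x) (hg0 : ∀ x, 0 ≤ g x)
    (hfm : AEStronglyMeasurable f μ) (hgm : AEStronglyMeasurable g μ)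
    (hf : Integrable (fun x => f x ^ 2) μ) (hg : Integrable (fun x => g x ^ 2) μ) :
    ∫ x, f x * g x ∂μ ≤ Real.sqrt (∫ x, f x ^ 2 ∂μ) * Real.sqrt (∫ x, g x ^ 2 ∂μ) := by
  have h := integral_mul_le_Lp_mul_Lq_of_nonneg (μ := μ) (p := 2) (q := 2) (f := f) (g := g)
    Real.HolderConjugate.two_two
    (Filter.Eventually.of_forall hf0) (Filter.Eventually.of_forall hg0)
    (by simpa using (memLp_two_iff_integrable_sq hfm).2 hf)
    (by simpa using (memLp_two_iff_integrable_sq hgm).2 hg)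
  simpa [Real.sqrt_eq_rpow] using h

lemma decay' (a : ℝ) {f : (E2 × ℝ) → ℂ} (hf : Good f) :
    ∃ K : ℝ, 0 ≤ K ∧ ∀ ξ z, W ξ ^ a * ‖partialFourier f ξ z‖ ≤ K * W ξ ^ (-2 : ℝ) := by
  obtain ⟨N, hN⟩ := exists_nat_ge (a + 2)
  obtain ⟨K, hK0, hK⟩ := decay N f hf
  refine ⟨K, hK0, fun ξ z => ?_⟩
  have h1 : W ξ ^ a ≤ W ξ ^ (-2 : ℝ) * W ξ ^ N := by
    rw [← Real.rpow_natCast, ← Real.rpow_add (W_pos ξ)]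
    exact Real.rpow_le_rpow_of_exponent_le (one_le_W ξ) (by linarith)
  calc W ξ ^ a * ‖partialFourier f ξ z‖
      ≤ (W ξ ^ (-2 : ℝ) * W ξ ^ N) * ‖partialFourier f ξ z‖ := by gcongr
    _ = W ξ ^ (-2 : ℝ) * (W ξ ^ N * ‖partialFourier f ξ z‖) := by ring
    _ ≤ W ξ ^ (-2 : ℝ) * K :=
        mul_le_mul_of_nonneg_left (hK ξ z) (Real.rpow_nonneg (W_pos ξ).le _)
    _ = _ := by ring

lemma Wr_cont (a : ℝ) : Continuous (fun ξ : E2 => W ξ ^ a) :=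
  W_cont.rpow_const fun x => Or.inl (W_pos x).ne'

lemma Wr_nonneg (a : ℝ) (ξ : E2) : 0 ≤ W ξ ^ a := Real.rpow_nonneg (W_pos ξ).le _

lemma decay2 (a : ℝ) {f g : (E2 × ℝ) → ℂ} (hf : Good f) (hg : Good g) :
    ∃ K : ℝ, 0 ≤ K ∧ ∀ ξ z, W ξ ^ a * (‖partialFourier f ξ z‖ * ‖partialFourier g ξ z‖)
      ≤ K * W ξ ^ (-2 : ℝ) := by
  obtain ⟨K, hK0, hK⟩ := decay' a hf
  obtain ⟨L, hL0, hL⟩ := decay 0 g hg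
  refine ⟨K * L, by positivity, fun ξ z => ?_⟩
  have := hL ξ z
  rw [pow_zero, one_mul] at this
  have h2 := mul_le_mul (hK ξ z) this (norm_nonneg _) (mul_nonneg hK0 (Wr_nonneg _ _))
  linarith

lemma prod_cont (a : ℝ) {f g : (E2 × ℝ) → ℂ} (hf : Good f) (hg : Good g) :
    Continuous (fun p : E2 × ℝ =>
      W p.1 ^ a * (‖partialFourier f p.1 p.2‖ * ‖partialFourier g p.1 p.2‖)) :=
  ((Wr_cont a).comp continuous_fst).mul ((PF_cont hf).norm.mul (PF_cont hg).norm)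

lemma slice_int (a : ℝ) {f g : (E2 × ℝ) → ℂ} (hf : Good f) (hg : Good g) (z : ℝ) :
    Integrable (fun ξ : E2 => W ξ ^ a * (‖partialFourier f ξ z‖ * ‖partialFourier g ξ z‖)) := by
  obtain ⟨K, hK0, hK⟩ := decay2 a hf hg
  refine ((W_int (s := 2) (by norm_num)).const_mul K).mono' ?_
    (Filter.Eventually.of_forall fun ξ => ?_)
  · exact ((prod_cont a hf hg).comp (Continuous.prodMk_left z)).aestronglyMeasurable
  · rw [Real.norm_of_nonneg (mul_nonneg (Wr_nonneg _ _) (by positivity))]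
    exact hK ξ z

lemma prod_int (a : ℝ) {f g : (E2 × ℝ) → ℂ} (hf : Good f) (hg : Good g) :
    Integrable (fun p : E2 × ℝ =>
      W p.1 ^ a * (‖partialFourier f p.1 p.2‖ * ‖partialFourier g p.1 p.2‖))
      (volume.prod (volume.restrict (Set.Iio (0 : ℝ)))) := by
  obtain ⟨K, hK0, hK⟩ := decay2 a hf hg
  obtain ⟨R, hR⟩ := PF_supp hf
  have hind : Integrable ((Set.Icc (-R) R).indicator (fun _ => (1 : ℝ)))
      (volume.restrict (Set.Iio (0 : ℝ))) := by
    refine Integrable.restrict ?_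
    exact (integrable_indicator_iff measurableSet_Icc).2
      (integrableOn_const measure_Icc_lt_top.ne)
  refine (((W_int (s := 2) (by norm_num)).const_mul K).mul_prod hind).mono'
    (prod_cont a hf hg).aestronglyMeasurable
    (Filter.Eventually.of_forall fun p => ?_)
  rw [Real.norm_of_nonneg (mul_nonneg (Wr_nonneg _ _) (by positivity))]
  by_cases h : p.2 ∈ Set.Icc (-R) R
  · simpa [h] using hK p.1 p.2
  · rw [hR p.1 p.2 (by by_contra h'; exact h (abs_le.1 (not_lt.1 h')))]
    simp [h]

lemma one_dim_aux {u u' : ℝ → ℂ} (c0 : Continuous u) (c1 : Continuous u')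
    (hd : ∀ x, HasDerivAt u (u' x) x) {R : ℝ} (hR : ∀ x, R < |x| → u x = 0) {z : ℝ} (hz : z ≤ 0) :
    ‖u z‖ ^ 2 ≤ 2 * ∫ x in Set.Iio (0 : ℝ), ‖u x‖ * ‖u' x‖ := by
  have ii : Integrable (fun x => 2 * inner ℝ (u x) (u' x)) := by
    refine Continuous.integrable_of_hasCompactSupport (by fun_prop) ?_
    refine HasCompactSupport.intro (isCompact_closedBall (0 : ℝ) R) (fun y hy => ?_)
    rw [hR y (by simpa using hy), inner_zero_left, mul_zero]
  have i2 : Integrable (fun x => 2 * (‖u x‖ * ‖u' x‖)) := by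
    refine Continuous.integrable_of_hasCompactSupport (by fun_prop) ?_
    refine HasCompactSupport.intro (isCompact_closedBall (0 : ℝ) R) (fun y hy => ?_)
    rw [hR y (by simpa using hy)]; simp
  have hd2 : ∀ x ∈ Set.Iic z, HasDerivAt (fun x => ‖u x‖ ^ 2) (2 * inner ℝ (u x) (u' x)) x :=
    fun x _ => (hd x).norm_sq
  have ht : Filter.Tendsto (fun x => ‖u x‖ ^ 2) Filter.atBot (nhds 0) := by
    refine tendsto_const_nhds.congr' ?_
    filter_upwards [Filter.eventually_lt_atBot (-R)] with x hx
    rw [hR x (lt_of_lt_of_le (by linarith) (neg_le_abs x))]; simp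
  have h := integral_Iic_of_hasDerivAt_of_tendsto' hd2 ii.integrableOn ht
  rw [sub_zero] at h
  rw [← h, ← integral_Iic_eq_integral_Iio, ← integral_const_mul]
  calc _ ≤ ∫ x in Set.Iic z, 2 * (‖u x‖ * ‖u' x‖) := by
        refine integral_mono ii.integrableOn i2.integrableOn fun x => ?_
        exact mul_le_mul_of_nonneg_left (real_inner_le_norm _ _) (by norm_num)
    _ ≤ _ := by
        refine setIntegral_mono_set i2.integrableOn
          (Filter.Eventually.of_forall fun x => ?_) ?_
        · exact mul_nonneg (by norm_num) (mul_nonneg (norm_nonneg _) (norm_nonneg _))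
        · exact (Set.Iic_subset_Iic.2 hz).eventuallyLE

lemma one_dim {f : (E2 × ℝ) → ℂ} (hf : Good f) (ξ : E2) {z : ℝ} (hz : z ≤ 0) :
    ‖partialFourier f ξ z‖ ^ 2 ≤ 2 * ∫ z' in Set.Iio (0 : ℝ),
      ‖partialFourier f ξ z'‖ * ‖partialFourier (D (0, 1) f) ξ z'‖ := by
  obtain ⟨R, hR⟩ := PF_supp hf
  exact one_dim_aux ((PF_cont hf).comp (Continuous.prodMk_right ξ))
    ((PF_cont (hf.D _)).comp (Continuous.prodMk_right ξ)) (PF_deriv hf ξ) (hR ξ) hz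

open FourierTransform in
lemma inversion {f : (E2 × ℝ) → ℂ} (hf : Good f) (y : E2) (z : ℝ) :
    ‖f (y, z)‖ ≤ ∫ ξ, ‖partialFourier f ξ z‖ := by
  have mp := PiLp.volume_preserving_ofLp (Fin 2)
  have me : MeasurableEmbedding (@WithLp.ofLp 2 (Fin 2 → ℝ)) :=
    (MeasurableEquiv.toLp 2 (Fin 2 → ℝ)).symm.measurableEmbedding
  let h : EuclideanSpace ℝ (Fin 2) → ℂ := fun v => f (WithLp.ofLp v, z)
  have hF : 𝓕 h = fun w => partialFourier f (WithLp.ofLp w) z := by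
    ext w
    rw [Real.fourier_eq', PF_eq, ← mp.integral_comp me]
    congr 1; ext v
    simp only [h, ker, smul_eq_mul]
    congr 3
    simp [PiLp.inner_apply]
    ring
  have i1 : Integrable h := by
    refine (mp.integrable_comp_emb me (g := fun y => f (y, z))).2 ?_
    exact (slice_cont hf z).integrable_of_hasCompactSupport (slice_supp hf z)
  have i0 : Integrable (fun ξ => partialFourier f ξ z) := by
    obtain ⟨K, hK0, hK⟩ := decay' 0 hf
    refine ((W_int (s := 2) (by norm_num)).const_mul K).mono'
      ((PF_cont hf).comp (Continuous.prodMk_left z)).aestronglyMeasurable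
      (Filter.Eventually.of_forall fun ξ => ?_)
    simpa using hK ξ z
  have i2 : Integrable (𝓕 h) := by
    rw [hF]
    exact (mp.integrable_comp_emb me (g := fun ξ => partialFourier f ξ z)).2 i0
  have hc : Continuous h := (slice_cont hf z).comp (PiLp.continuous_ofLp 2 _)
  have := i1.fourierInv_fourier_eq i2 (v := WithLp.toLp 2 y) hc.continuousAt
  have e : f (y, z) = h (WithLp.toLp 2 y) := rfl
  rw [e, ← this, Real.fourierInv_eq', ← mp.integral_comp me]
  refine (norm_integral_le_integral_norm _).trans (le_of_eq ?_)
  congr 1; ext v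
  rw [norm_smul, Complex.norm_exp_ofReal_mul_I, one_mul, hF]

lemma main (s₁ s₂ : ℝ) (hs : 2 < s₁ + s₂) {f : (E2 × ℝ) → ℂ} (hf : Good f) (y : E2) (z : ℝ)
    (hz : z ≤ 0) :
    ‖f (y, z)‖ ^ 2 ≤ (2 * (∫ ξ : E2, W ξ ^ (-((s₁ + s₂) / 2))) + 1) *
      Real.sqrt (∫ ξ : E2, ∫ z' in Set.Iio (0 : ℝ),
        W ξ ^ s₂ * ‖partialFourier (D (0, 1) f) ξ z'‖ ^ 2) *
      Real.sqrt (∫ ξ : E2, ∫ z' in Set.Iio (0 : ℝ),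
        W ξ ^ s₁ * ‖partialFourier f ξ z'‖ ^ 2) := by
  have hg := hf.D (0, 1)
  set s := (s₁ + s₂) / 2 with hsdef
  have hs1 : 1 < s := by linarith
  have sqW : ∀ (a : ℝ) (ξ : E2), (W ξ ^ (a / 2)) ^ 2 = W ξ ^ a := by
    intro a ξ
    rw [← Real.rpow_natCast, ← Real.rpow_mul (W_pos ξ).le]
    norm_num
  -- step 1
  have a1 : ‖f (y, z)‖ ^ 2 ≤ (∫ ξ : E2, W ξ ^ (-s)) *
      ∫ ξ : E2, W ξ ^ s * (‖partialFourier f ξ z‖ * ‖partialFourier f ξ z‖) := by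
    have h := CS (μ := (volume : Measure E2)) (f := fun ξ => W ξ ^ (-s / 2))
      (g := fun ξ => W ξ ^ (s / 2) * ‖partialFourier f ξ z‖)
      (fun ξ => Wr_nonneg _ _) (fun ξ => mul_nonneg (Wr_nonneg _ _) (norm_nonneg _))
      (Wr_cont _).aestronglyMeasurable
      ((Wr_cont _).mul ((PF_cont hf).comp (Continuous.prodMk_left z)).norm).aestronglyMeasurable
      (by simp_rw [sqW]; exact W_int hs1)
      (by simp_rw [mul_pow, sqW]; simpa only [sq] using slice_int s hf hf z)
    have e1 : ∀ ξ : E2, W ξ ^ (-s / 2) * (W ξ ^ (s / 2) * ‖partialFourier f ξ z‖)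
        = ‖partialFourier f ξ z‖ := by
      intro ξ
      rw [← mul_assoc, ← Real.rpow_add (W_pos ξ)]
      ring_nf; simp
    simp_rw [e1, mul_pow, sqW] at h
    simp_rw [← sq]
    have h3 := pow_le_pow_left₀ (norm_nonneg _) ((inversion hf y z).trans h) 2
    rwa [mul_pow, Real.sq_sqrt (integral_nonneg fun ξ => Wr_nonneg _ _),
      Real.sq_sqrt (integral_nonneg fun ξ => mul_nonneg (Wr_nonneg _ _) (sq_nonneg _))] at h3
  -- step 2
  have pI := prod_int s hf hg
  have a2 : ∫ ξ : E2, W ξ ^ s * (‖partialFourier f ξ z‖ * ‖partialFourier f ξ z‖) ≤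
      2 * ∫ p : E2 × ℝ, W p.1 ^ s * (‖partialFourier f p.1 p.2‖ *
        ‖partialFourier (D (0, 1) f) p.1 p.2‖) ∂(volume.prod (volume.restrict (Set.Iio (0 : ℝ)))) := by
    rw [integral_prod _ pI, ← integral_const_mul]
    refine integral_mono (slice_int s hf hf z) (pI.integral_prod_left.const_mul 2) fun ξ => ?_
    simp only
    rw [integral_const_mul]
    have := mul_le_mul_of_nonneg_left (one_dim hf ξ hz) (Wr_nonneg s ξ)
    rw [sq] at this
    linarith
  -- step 3
  have a3 : ∫ p : E2 × ℝ, W p.1 ^ s * (‖partialFourier f p.1 p.2‖ *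
        ‖partialFourier (D (0, 1) f) p.1 p.2‖) ∂(volume.prod (volume.restrict (Set.Iio (0 : ℝ))))
      ≤ Real.sqrt (∫ ξ : E2, ∫ z' in Set.Iio (0 : ℝ),
        W ξ ^ s₂ * ‖partialFourier (D (0, 1) f) ξ z'‖ ^ 2) *
      Real.sqrt (∫ ξ : E2, ∫ z' in Set.Iio (0 : ℝ),
        W ξ ^ s₁ * ‖partialFourier f ξ z'‖ ^ 2) := by
    have q1 := prod_int s₁ hf hf
    have q2 := prod_int s₂ hg hg
    simp_rw [← sq] at q1 q2
    have h := CS (μ := ((volume : Measure E2).prod (volume.restrict (Set.Iio (0 : ℝ)))))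
      (f := fun p => W p.1 ^ (s₂ / 2) * ‖partialFourier (D (0, 1) f) p.1 p.2‖)
      (g := fun p => W p.1 ^ (s₁ / 2) * ‖partialFourier f p.1 p.2‖)
      (fun ξ => mul_nonneg (Wr_nonneg _ _) (norm_nonneg _))
      (fun ξ => mul_nonneg (Wr_nonneg _ _) (norm_nonneg _))
      (((Wr_cont _).comp continuous_fst).mul (PF_cont hg).norm).aestronglyMeasurable
      (((Wr_cont _).comp continuous_fst).mul (PF_cont hf).norm).aestronglyMeasurable
      (by simp_rw [mul_pow, sqW]; exact q2)
      (by simp_rw [mul_pow, sqW]; exact q1)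
    simp_rw [mul_pow, sqW] at h
    rw [integral_prod _ q1, integral_prod _ q2] at h
    refine le_trans (le_of_eq ?_) h
    congr 1; ext p
    have : W p.1 ^ s = W p.1 ^ (s₂ / 2) * W p.1 ^ (s₁ / 2) := by
      rw [← Real.rpow_add (W_pos p.1)]; congr 1; rw [hsdef]; ring
    rw [this]; ring
  have hI : 0 ≤ ∫ ξ : E2, W ξ ^ (-s) := integral_nonneg fun ξ => Wr_nonneg _ _
  rw [mul_assoc]
  set P := Real.sqrt (∫ ξ : E2, ∫ z' in Set.Iio (0 : ℝ),
        W ξ ^ s₂ * ‖partialFourier (D (0, 1) f) ξ z'‖ ^ 2) *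
      Real.sqrt (∫ ξ : E2, ∫ z' in Set.Iio (0 : ℝ),
        W ξ ^ s₁ * ‖partialFourier f ξ z'‖ ^ 2) with hP
  have hP0 : 0 ≤ P := by positivity
  have := mul_le_mul_of_nonneg_left (a2.trans (mul_le_mul_of_nonneg_left a3 (by norm_num))) hI
  linarith

end AS

/-- Anisotropic Sobolev embedding (2.4) of Proposition 2.2:
for `s₁, s₂ ≥ 0` with `s₁ + s₂ > 2`, `‖f‖²_{L^∞(S)} ≲ ‖∂_z f‖_{H^{s₂}_tan} ‖f‖_{H^{s₁}_tan}`. -/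
theorem anisotropic_sobolev (s₁ s₂ : ℝ) (hs₁ : 0 ≤ s₁) (hs₂ : 0 ≤ s₂) (hs : 2 < s₁ + s₂) :
    ∃ C : ℝ, 0 < C ∧
      ∀ f : ((Fin 2 → ℝ) × ℝ) → ℂ, ContDiff ℝ (⊤ : ℕ∞) f → HasCompactSupport f →
        ∀ (y : Fin 2 → ℝ) (z : ℝ), z ≤ 0 →
          ‖f (y, z)‖ ^ 2
            ≤ C *
              Real.sqrt (∫ ξ : Fin 2 → ℝ, ∫ z' in Set.Iio (0 : ℝ),
                  ((1 : ℝ) + ∑ i : Fin 2, ξ i ^ 2) ^ s₂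
                    * ‖deriv (partialFourier f ξ) z'‖ ^ 2) *
              Real.sqrt (∫ ξ : Fin 2 → ℝ, ∫ z' in Set.Iio (0 : ℝ),
                  ((1 : ℝ) + ∑ i : Fin 2, ξ i ^ 2) ^ s₁
                    * ‖partialFourier f ξ z'‖ ^ 2) := by
  refine ⟨2 * (∫ ξ : AS.E2, AS.W ξ ^ (-((s₁ + s₂) / 2))) + 1, ?_, ?_⟩
  · have : 0 ≤ ∫ ξ : AS.E2, AS.W ξ ^ (-((s₁ + s₂) / 2)) :=
      integral_nonneg fun ξ => AS.Wr_nonneg _ _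
    linarith
  · intro f h1 h2 y z hz
    have hf : AS.Good f := ⟨h1, h2⟩
    have h := AS.main s₁ s₂ hs hf y z hz
    simp_rw [fun ξ z' => (AS.PF_deriv hf ξ z').deriv]
    exact h
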